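/- For all reals r > 0 and b > 0, ∫_r^∞ (b/(b + (y/r)⁴)) · y dy = (r²√b / 2) · arctan(√b). -/

import Mathlib

open Real MeasureTheory Set

/-!
The substitution `u = (y/r)²/√b` shows that `y ↦ (r²√b/2)·arctan((y/r)²/√b)` is an antiderivative
of the integrand. The integrand is nonnegative and the antiderivative has a limit at infinity, so
the fundamental theorem of calculus on `(r, ∞)` applies, integrability included, and gives
`(r²√b/2)·(π/2 - arctan(1/√b))`, which equals the claim by `arctan x + arctan (1/x) = π/2`.
-/

/-- Closed form of the interference integral for path-loss exponent `4`:
`∫_r^∞ (b/(b + (y/r)⁴))·y dy = (r²√b/2)·arctan(√b)`. -/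
theorem interference_integral_from_r (r b : ℝ) (hr : 0 < r) (hb : 0 < b) :
    ∫ y in Ioi r, b / (b + (y / r) ^ (4 : ℕ)) * y
      = r ^ 2 * Real.sqrt b / 2 * Real.arctan (Real.sqrt b) := by
  obtain ⟨s, hs, rfl⟩ : ∃ s : ℝ, 0 < s ∧ b = s ^ 2 :=
    ⟨√b, Real.sqrt_pos.2 hb, (Real.sq_sqrt hb.le).symm⟩
  rw [Real.sqrt_sq hs.le]
  have hderiv : ∀ y ∈ Ici r,
      HasDerivAt (fun y : ℝ => r ^ 2 * s / 2 * arctan (s⁻¹ * (y / r) ^ 2))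
        (s ^ 2 / (s ^ 2 + (y / r) ^ (4 : ℕ)) * y) y := by
    intro y _
    have h := (((((hasDerivAt_id y).div_const r).pow 2).const_mul s⁻¹).arctan).const_mul
      (r ^ 2 * s / 2)
    refine h.congr_deriv ?_
    have h1 : s ^ 2 + (y / r) ^ 4 ≠ 0 := by positivity
    have h2 : 1 + (s⁻¹ * (y / r) ^ 2) ^ 2 = (s ^ 2 + (y / r) ^ 4) / s ^ 2 := by
      field_simp
    simp only [id, Pi.pow_apply, h2]
    generalize s ^ 2 + (y / r) ^ 4 = D at h1
    field_simp
    norm_num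
    field_simp
  have hlim : Filter.Tendsto (fun y : ℝ => r ^ 2 * s / 2 * arctan (s⁻¹ * (y / r) ^ 2))
      Filter.atTop (nhds (r ^ 2 * s / 2 * (π / 2))) := by
    refine Filter.Tendsto.const_mul _ ?_
    refine (tendsto_nhds_of_tendsto_nhdsWithin tendsto_arctan_atTop).comp ?_
    refine Filter.Tendsto.const_mul_atTop (inv_pos.2 hs) ?_
    exact (Filter.tendsto_pow_atTop two_ne_zero).comp (Filter.tendsto_id.atTop_div_const hr)
  rw [integral_Ioi_of_hasDerivAt_of_nonneg' hderiv ?_ hlim]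
  · rw [div_self hr.ne', one_pow, mul_one, arctan_inv_of_pos hs]
    ring
  · intro y hy
    have : 0 < y := hr.trans hy
    positivity
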